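/- arXiv:2410.04798 — 2 statements merged into one kernel-verified Lean document; each statement's English description precedes it below -/
import Mathlib

section
/- Let V be a vocabulary (a type), d a positive natural number, and e : V → EuclideanSpace ℝ (Fin d) a family of token embeddings that is orthonormal: ⟪e u, e v⟫ = 1 if u = v and 0 otherwise. Let t : ℕ → V be a token sequence, N ≥ 1, and a, b ∈ V with a ≠ b, such that every occurrence of a before position N is immediately followed by b (for all i < N, t i = a implies t (i+1) = b) and there exists i < N with t i = a. Define s_j = ⟪e a, e (t (j-1))⟫ - ⟪e a, e (t j)⟫ for 1 ≤ j ≤ N. Then max_{1 ≤ j ≤ N} s_j = 1, and every maximizer j ∈ {1, …, N} of s satisfies t j = b. -/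
open scoped InnerProductSpace

/-! For a fixed query the score at `j` is `f (t (j - 1)) - f (t j)`, where `f v` is the inner
product of the query with the embedding of the token `v`. If `f` is largest at `a` and smallest at
`b`, such a difference is at most `f a - f b`, and this value is reached right after an occurrence
of `a`. If moreover `f` is largest only at `a`, a maximizing `j` has `t (j - 1) = a`, hence
`t j = b`. Orthonormality makes `f` the indicator of `a` when the query is `e a`. -/

section Differences

variable {V G : Type*} [AddCommGroup G] {f : V → G} {a b : V}

theorem eq_left_of_sub_eq_max_sub_min [PartialOrder G] [IsOrderedAddMonoid G]
    (ha : ∀ v ≠ a, f v < f a) (hb : ∀ v, f b ≤ f v) {u v : V} (h : f u - f v = f a - f b) :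
    u = a :=
  by_contra fun hu =>
    ((sub_lt_sub_right (ha u hu) (f v)).trans_le (sub_le_sub_left (hb v) (f a))).ne h

theorem sup'_sub_eq_max_sub_min [SemilatticeSup G] [IsOrderedAddMonoid G]
    (ha : ∀ v, f v ≤ f a) (hb : ∀ v, f b ≤ f v) {ι : Type*} {S : Finset ι} (hS : S.Nonempty)
    {x y : ι → V} (hab : ∃ i ∈ S, x i = a ∧ y i = b) :
    S.sup' hS (fun i => f (x i) - f (y i)) = f a - f b := by
  apply le_antisymm
  · exact Finset.sup'_le hS _ fun i _ => sub_le_sub (ha (x i)) (hb (y i))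
  · obtain ⟨i, hi, rfl, rfl⟩ := hab
    exact Finset.le_sup' (fun i => f (x i) - f (y i)) hi

theorem argmax_attends_to_b_general [SemilatticeSup G] [IsOrderedAddMonoid G]
    (ha : ∀ v ≠ a, f v < f a) (hb : ∀ v, f b ≤ f v) {t : ℕ → V} {N : ℕ} (hN : 1 ≤ N)
    (hfollow : ∀ i < N, t i = a → t (i + 1) = b) (hocc : ∃ i < N, t i = a)
    {s : ℕ → G} (hs : ∀ j, 1 ≤ j → j ≤ N → s j = f (t (j - 1)) - f (t j)) :
    (Finset.Icc 1 N).sup' (Finset.nonempty_Icc.mpr hN) s = f a - f b ∧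
    ∀ j ∈ Finset.Icc 1 N,
      s j = (Finset.Icc 1 N).sup' (Finset.nonempty_Icc.mpr hN) s → t j = b := by
  have hs_mem : ∀ j ∈ Finset.Icc 1 N, s j = f (t (j - 1)) - f (t j) := fun j hj =>
    hs j (Finset.mem_Icc.mp hj).1 (Finset.mem_Icc.mp hj).2
  have ha_le : ∀ v, f v ≤ f a := fun v => by
    obtain rfl | hv := eq_or_ne v a
    exacts [le_rfl, (ha v hv).le]
  have h_attained : ∃ j ∈ Finset.Icc 1 N, t (j - 1) = a ∧ t j = b := by
    obtain ⟨i, hi, hia⟩ := hocc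
    exact ⟨i + 1, Finset.mem_Icc.mpr ⟨i.succ_pos, hi⟩, hia, hfollow i hi hia⟩
  have h_max : (Finset.Icc 1 N).sup' (Finset.nonempty_Icc.mpr hN) s = f a - f b :=
    (Finset.sup'_congr _ rfl hs_mem).trans (sup'_sub_eq_max_sub_min ha_le hb _ h_attained)
  refine ⟨h_max, fun j hj hj_max => ?_⟩
  have h_prev : t (j - 1) = a :=
    eq_left_of_sub_eq_max_sub_min ha hb ((hs_mem j hj).symm.trans (hj_max.trans h_max))
  obtain ⟨hj_pos, hj_le⟩ := Finset.mem_Icc.mp hj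
  simpa only [Nat.sub_add_cancel hj_pos] using
    hfollow (j - 1) (Nat.sub_one_lt_of_le hj_pos hj_le) h_prev

end Differences

section Orthonormal

variable {V E : Type*} [SeminormedAddCommGroup E] [InnerProductSpace ℝ E] {e : V → E} {a b : V}

theorem inner_lt_inner_self_of_orthonormal (he : Orthonormal ℝ e) (v : V) (hv : v ≠ a) :
    ⟪e a, e v⟫_ℝ < ⟪e a, e a⟫_ℝ := by
  rw [he.inner_eq_zero hv.symm, real_inner_self_eq_norm_sq, he.norm_eq_one a]
  positivity

theorem inner_le_inner_of_orthonormal (he : Orthonormal ℝ e) (hab : a ≠ b) (v : V) :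
    ⟪e a, e b⟫_ℝ ≤ ⟪e a, e v⟫_ℝ := by
  classical
  rw [he.inner_eq_zero hab, orthonormal_iff_ite.mp he]
  positivity

end Orthonormal

/-- If every occurrence of `a` before position `N` is immediately followed by `b ≠ a`,
and `a` occurs before position `N`, then the convolution-processed scores
`s_j = ⟪e a, e (t (j-1))⟫ - ⟪e a, e (t j)⟫` over `1 ≤ j ≤ N` have maximum 1,
and every maximizer `j` satisfies `t j = b`. -/
theorem argmax_attends_to_b
    (V : Type*) [DecidableEq V] (d : ℕ) (hd : 0 < d)
    (e : V → EuclideanSpace ℝ (Fin d))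
    (he : ∀ u v : V, ⟪e u, e v⟫_ℝ = if u = v then 1 else 0)
    (t : ℕ → V) (N : ℕ) (hN : 1 ≤ N) (a b : V) (hab : a ≠ b)
    (hfollow : ∀ i : ℕ, i < N → t i = a → t (i + 1) = b)
    (hocc : ∃ i : ℕ, i < N ∧ t i = a)
    (s : ℕ → ℝ)
    (hs : ∀ j : ℕ, 1 ≤ j → j ≤ N →
      s j = ⟪e a, e (t (j - 1))⟫_ℝ - ⟪e a, e (t j)⟫_ℝ) :
    (Finset.Icc 1 N).sup' (Finset.nonempty_Icc.mpr hN) s = 1 ∧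
    ∀ j ∈ Finset.Icc 1 N,
      s j = (Finset.Icc 1 N).sup' (Finset.nonempty_Icc.mpr hN) s → t j = b := by
  have he_orth : Orthonormal ℝ e := orthonormal_iff_ite.mpr he
  simpa only [he, if_true, if_neg hab, sub_zero] using argmax_attends_to_b_general
    (inner_lt_inner_self_of_orthonormal he_orth) (inner_le_inner_of_orthonormal he_orth hab)
    hN hfollow hocc hs
end

section
/- Let n be a positive natural number and s : Fin n → ℝ. Let M = {j : s j = max_m s m} be the (nonempty) set of maximizers of s. Then for every j ∈ Fin n, the softmax weight at inverse temperature β, namely exp(β · s j) / Σ_{m} exp(β · s m), converges as β → ∞ to 1 / |M| if j ∈ M, and to 0 if j ∉ M. -/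
/-!
Softmax is unchanged when a constant is subtracted from all scores, so the maximal score may be
taken to be `0`. Then, as `β → ∞`, every `exp (β * s m)` tends to `1` at a maximizer and to `0`
elsewhere, so the normalizing sum tends to the number of maximizers, which is not zero.
-/

open Filter Topology

/-- The softmax distribution of a finite score vector `x`. The inverse temperature is not a separate
argument: at inverse temperature `β` the distribution of `s` is `softmax (β • s)`. -/
noncomputable def softmax {ι : Type*} [Fintype ι] (x : ι → ℝ) (j : ι) : ℝ :=
  Real.exp (x j) / ∑ m, Real.exp (x m)

theorem tendsto_exp_mul_atTop_of_nonpos {a : ℝ} (ha : a ≤ 0) :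
    Tendsto (fun β : ℝ ↦ Real.exp (β * a)) atTop (𝓝 (if a = 0 then 1 else 0)) := by
  rcases ha.eq_or_lt with rfl | ha
  · simp
  · rw [if_neg ha.ne]
    exact Real.tendsto_exp_atBot.comp (tendsto_id.atTop_mul_const_of_neg ha)

theorem tendsto_sum_exp_mul_atTop_of_nonpos {ι : Type*} {t : Finset ι} {x : ι → ℝ}
    (hx : ∀ m ∈ t, x m ≤ 0) :
    Tendsto (fun β : ℝ ↦ ∑ m ∈ t, Real.exp (β * x m)) atTop
      (𝓝 ({m ∈ t | x m = 0}.card : ℝ)) := by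
  rw [← Finset.sum_boole]
  exact tendsto_finsetSum t fun m hm ↦ tendsto_exp_mul_atTop_of_nonpos (hx m hm)

theorem isGreatest_range_univ_sup' {ι α : Type*} [Fintype ι] [LinearOrder α]
    (h : (Finset.univ : Finset ι).Nonempty) (f : ι → α) :
    IsGreatest (Set.range f) (Finset.univ.sup' h f) := by
  obtain ⟨k, -, hk⟩ := Finset.exists_mem_eq_sup' h f
  exact ⟨⟨k, hk.symm⟩, Set.forall_mem_range.2 fun m ↦ Finset.le_sup' f (Finset.mem_univ m)⟩

section Softmax

variable {ι : Type*} [Fintype ι]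

theorem softmax_sub_const (x : ι → ℝ) (c : ℝ) :
    softmax (x - Function.const ι c) = softmax x := by
  ext j
  simp only [softmax, Pi.sub_apply, Function.const_apply, Real.exp_sub, ← Finset.sum_div]
  exact div_div_div_cancel_right₀ (Real.exp_ne_zero c) _ _

theorem tendsto_softmax_smul_of_isGreatest_zero {x : ι → ℝ} (hx : IsGreatest (Set.range x) 0)
    (j : ι) :
    Tendsto (fun β : ℝ ↦ softmax (β • x) j) atTop
      (𝓝 (if x j = 0 then 1 / ({m | x m = 0} : Finset ι).card else 0)) := by
  have hle (m : ι) : x m ≤ 0 := hx.2 ⟨m, rfl⟩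
  obtain ⟨k, hk⟩ := hx.1
  have hcard : (({m | x m = 0} : Finset ι).card : ℝ) ≠ 0 :=
    Nat.cast_ne_zero.2 (Finset.card_ne_zero_of_mem ((Finset.mem_filter_univ k).2 hk))
  have hlim := (tendsto_exp_mul_atTop_of_nonpos (hle j)).div
    (tendsto_sum_exp_mul_atTop_of_nonpos fun m _ ↦ hle m) hcard
  rw [ite_div, zero_div] at hlim
  exact hlim

theorem softmax_tendsto_argmax_general [DecidableEq ι] {s : ι → ℝ} {c : ℝ}
    (hc : IsGreatest (Set.range s) c) {M : Finset ι} (hM : ∀ j, j ∈ M ↔ s j = c) (j : ι) :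
    Tendsto (fun β : ℝ ↦ softmax (β • s) j) atTop (𝓝 (if j ∈ M then 1 / (M.card : ℝ) else 0)) := by
  have hmax : IsGreatest (Set.range (s - Function.const ι c)) 0 := by
    obtain ⟨⟨k, hk⟩, hle⟩ := hc
    exact ⟨⟨k, sub_eq_zero.2 hk⟩,
      Set.forall_mem_range.2 fun m ↦ sub_nonpos.2 (hle ⟨m, rfl⟩)⟩
  have hmem (m : ι) : (s - Function.const ι c) m = 0 ↔ m ∈ M := sub_eq_zero.trans (hM m).symm
  have hshift (β : ℝ) : softmax (β • (s - Function.const ι c)) = softmax (β • s) := by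
    rw [smul_sub]
    exact softmax_sub_const (β • s) (β * c)
  simpa only [hmem, hshift, Finset.filter_univ_mem] using
    tendsto_softmax_smul_of_isGreatest_zero hmax j

end Softmax

/-- As the inverse temperature `β → ∞`, the softmax weight at index `j` converges
to `1 / |M|` if `j` is a maximizer of the scores `s`, and to `0` otherwise. -/
theorem softmax_tendsto_argmax
    (n : ℕ) (hn : 0 < n) (s : Fin n → ℝ)
    (M : Finset (Fin n))
    (hM : ∀ j : Fin n,
      j ∈ M ↔ s j = Finset.univ.sup' (Finset.univ_nonempty_iff.mpr ⟨⟨0, hn⟩⟩) s) :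
    ∀ j : Fin n,
      Filter.Tendsto
        (fun β : ℝ => Real.exp (β * s j) / ∑ m : Fin n, Real.exp (β * s m))
        Filter.atTop
        (nhds (if j ∈ M then 1 / (M.card : ℝ) else 0)) :=
  softmax_tendsto_argmax_general (isGreatest_range_univ_sup' _ s) hM
end
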